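/- Let (G, G⁺, Δ) be a support-preserving LCM-Garside structure, let x ∈ G, and let m be a nonzero integer. Then the parabolic closures of x and x^m coincide: PC(x^m) = PC(x). Consequently, if y belongs to a parabolic subgroup H of G and x ∈ G satisfies x^m = y, then x ∈ H. -/

import Mathlib

open scoped Pointwise Classical

/-- A Garside structure on a group `G`: a submonoid `pos` of positive elements with
trivial units, prefix and suffix lattice operations, and a Garside element `delta`. -/
structure GarsideStructure (G : Type*) [Group G] where
  /-- the submonoid of positive elements -/
  pos : Submonoid G
  /-- the Garside element Δ -/
  delta : G
  /-- meet for the prefix order -/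
  meet : G → G → G
  /-- join for the prefix order -/
  join : G → G → G
  /-- meet for the suffix order -/
  rmeet : G → G → G
  /-- join for the suffix order -/
  rjoin : G → G → G
  units_triv : ∀ a : G, a ∈ pos → a⁻¹ ∈ pos → a = 1
  meet_le_left : ∀ a b : G, (meet a b)⁻¹ * a ∈ pos
  meet_le_right : ∀ a b : G, (meet a b)⁻¹ * b ∈ pos
  le_meet : ∀ a b c : G, c⁻¹ * a ∈ pos → c⁻¹ * b ∈ pos → c⁻¹ * meet a b ∈ pos
  le_join_left : ∀ a b : G, a⁻¹ * join a b ∈ pos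
  le_join_right : ∀ a b : G, b⁻¹ * join a b ∈ pos
  join_le : ∀ a b c : G, a⁻¹ * c ∈ pos → b⁻¹ * c ∈ pos → (join a b)⁻¹ * c ∈ pos
  rmeet_le_left : ∀ a b : G, a * (rmeet a b)⁻¹ ∈ pos
  rmeet_le_right : ∀ a b : G, b * (rmeet a b)⁻¹ ∈ pos
  le_rmeet : ∀ a b c : G, a * c⁻¹ ∈ pos → b * c⁻¹ ∈ pos → rmeet a b * c⁻¹ ∈ pos
  rjoin_le_left : ∀ a b : G, rjoin a b * a⁻¹ ∈ pos
  rjoin_le_right : ∀ a b : G, rjoin a b * b⁻¹ ∈ pos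
  rjoin_le : ∀ a b c : G, c * a⁻¹ ∈ pos → c * b⁻¹ ∈ pos → c * (rjoin a b)⁻¹ ∈ pos
  delta_pos : delta ∈ pos
  /-- Δ is balanced: its positive prefixes coincide with its positive suffixes -/
  delta_balanced : ∀ s : G, s ∈ pos → (s⁻¹ * delta ∈ pos ↔ delta * s⁻¹ ∈ pos)
  /-- the set of simple elements (divisors of Δ) is finite -/
  divDelta_finite : {s : G | s ∈ pos ∧ s⁻¹ * delta ∈ pos}.Finite
  /-- the simple elements generate `G` -/
  divDelta_generates : Subgroup.closure {s : G | s ∈ pos ∧ s⁻¹ * delta ∈ pos} = ⊤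
  /-- the atoms generate the positive monoid -/
  atoms_generate :
    Submonoid.closure {a : G | a ∈ pos ∧ a ≠ 1 ∧
      ∀ b ∈ pos, b⁻¹ * a ∈ pos → b = 1 ∨ b = a} = pos
  /-- every atom divides Δ -/
  atoms_divide_delta : ∀ a : G, a ∈ pos → a ≠ 1 →
    (∀ b ∈ pos, b⁻¹ * a ∈ pos → b = 1 ∨ b = a) → a⁻¹ * delta ∈ pos
  /-- every element is bounded below and above by powers of Δ -/
  delta_bounds : ∀ x : G, ∃ p q : ℤ, p ≤ q ∧ (delta ^ p)⁻¹ * x ∈ pos ∧ x⁻¹ * delta ^ q ∈ pos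
  /-- conjugation by Δ maps the positive monoid bijectively onto itself -/
  conj_delta : ∀ a : G, a ∈ pos ↔ delta * a * delta⁻¹ ∈ pos
  /-- some positive power of Δ is central -/
  central_power : ∃ n : ℕ, 0 < n ∧ delta ^ n ∈ Subgroup.center G
  /-- no infinite strictly decreasing (for the prefix order) sequence of positive elements -/
  no_infinite_descent : ¬ ∃ f : ℕ → G, (∀ n, f n ∈ pos) ∧
    ∀ n, (f (n + 1))⁻¹ * f n ∈ pos ∧ f (n + 1) ≠ f n

namespace GarsideStructure

variable {G : Type*} [Group G] (S : GarsideStructure G)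

/-- the prefix order: `a ≼ b` iff `a⁻¹ * b` is positive -/
def le (a b : G) : Prop := a⁻¹ * b ∈ S.pos

/-- the set of positive prefixes of an element -/
def Div (d : G) : Set G := {s : G | s ∈ S.pos ∧ S.le s d}

/-- atoms: nontrivial positive elements with no nontrivial proper positive prefix -/
def IsAtomic (a : G) : Prop :=
  a ∈ S.pos ∧ a ≠ 1 ∧ ∀ b ∈ S.pos, S.le b a → b = 1 ∨ b = a

/-- the set of atoms -/
def atoms : Set G := {a : G | S.IsAtomic a}

/-- the left denominator of `x`: `D_L x = (1 ∧ x)⁻¹` -/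
def DL (x : G) : G := (S.meet 1 x)⁻¹

/-- the left numerator of `x`: `N_L x = D_L x * x` -/
def NL (x : G) : G := S.DL x * x

/-- the (left) swap `φ(x) = N_L x * (D_L x)⁻¹ = D_L x * x * (D_L x)⁻¹` -/
def swap (x : G) : G := S.DL x * x * (S.DL x)⁻¹

/-- an element is recurrent if it is fixed by some positive iterate of the swap map -/
def Recurrent (x : G) : Prop := ∃ m : ℕ, 0 < m ∧ S.swap^[m] x = x

/-- the set `R(x)` of recurrent conjugates of `x` -/
def Rset (x : G) : Set G := {y : G | IsConj x y ∧ S.Recurrent y}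

/-- the set `C⁺(x)` of positive conjugates of `x` -/
def Cpos (x : G) : Set G := {y : G | IsConj x y ∧ y ∈ S.pos}

/-- the set `C⁻(x)` of negative conjugates of `x` -/
def Cneg (x : G) : Set G := {y : G | IsConj x y ∧ y⁻¹ ∈ S.pos}

/-- the transport of `u` at `y`: with `y = a⁻¹ b` reduced, `u^{(1)} = (a u) ∧ (b u)` -/
def transport (y u : G) : G := S.meet (S.DL y * u) (S.NL y * u)

/-- `Δ_X`: the least upper bound for the prefix order of a set `X` (`1` if there is none) -/
noncomputable def deltaOf (X : Set G) : G :=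
  if h : ∃ d : G, (∀ x ∈ X, S.le x d) ∧ ∀ c : G, (∀ x ∈ X, S.le x c) → S.le d c
  then h.choose else 1

/-- the closure `X̄ = Div(Δ_X) ∩ 𝒜` of a set of atoms -/
noncomputable def closureOf (X : Set G) : Set G := S.Div (S.deltaOf X) ∩ S.atoms

/-- the subgroup `G_X` generated by the closure of `X` -/
noncomputable def GX (X : Set G) : Subgroup G := Subgroup.closure (S.closureOf X)

/-- the support of an element: the closure of the set of atoms appearing in atom
factorizations of its left denominator and left numerator -/
noncomputable def supp (x : G) : Set G :=
  if h : ∃ p : List G × List G,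
      (∀ a ∈ p.1, a ∈ S.atoms) ∧ (∀ a ∈ p.2, a ∈ S.atoms) ∧
      p.1.prod = S.DL x ∧ p.2.prod = S.NL x
  then S.closureOf ({a : G | a ∈ h.choose.1} ∪ {a : G | a ∈ h.choose.2})
  else ∅

/-- an LCM-Garside structure -/
structure IsLCM : Prop where
  delta_eq : S.delta = S.deltaOf S.atoms
  balanced : ∀ X ⊆ S.atoms, ∀ s ∈ S.pos,
    (S.le s (S.deltaOf X) ↔ S.deltaOf X * s⁻¹ ∈ S.pos)
  div_eq : ∀ X ⊆ S.atoms,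
    S.Div (S.deltaOf X) = S.Div S.delta ∩ {g : G | g ∈ S.GX X ∧ g ∈ S.pos}
  factor_closed : ∀ X ⊆ S.atoms, ∀ g : G, g ∈ S.GX X → g ∈ S.pos →
    ∀ a b : G, a ∈ S.pos → b ∈ S.pos → g = a * b → a ∈ S.GX X ∧ b ∈ S.GX X
  lattice_closed : ∀ X ⊆ S.atoms, ∀ a b : G, a ∈ S.GX X → b ∈ S.GX X →
    S.meet a b ∈ S.GX X ∧ S.join a b ∈ S.GX X
  fraction_closed : ∀ X ⊆ S.atoms, ∀ g : G, g ∈ S.GX X →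
    S.DL g ∈ S.GX X ∧ S.NL g ∈ S.GX X

/-- a standard parabolic subgroup: the subgroup generated by a saturated set of atoms -/
noncomputable def IsStandardParabolic (H : Subgroup G) : Prop :=
  ∃ X : Set G, X ⊆ S.atoms ∧ S.closureOf X = X ∧ H = S.GX X

/-- a parabolic subgroup: a conjugate of a standard parabolic subgroup -/
noncomputable def IsParabolic (H : Subgroup G) : Prop :=
  ∃ (P : Subgroup G) (c : G), S.IsStandardParabolic P ∧
    H = Subgroup.map (MulAut.conj c).toMonoidHom P

/-- the structure is support-preserving if conjugations between positive elements
conjugate the corresponding parabolic subgroups of the supports -/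
noncomputable def SupportPreserving : Prop :=
  ∀ y ∈ S.pos, ∀ z ∈ S.pos, ∀ α : G, α⁻¹ * y * α = z →
    Subgroup.map (MulAut.conj α⁻¹).toMonoidHom (S.GX (S.supp y)) = S.GX (S.supp z)

/-- `P` is the parabolic closure of `x` -/
noncomputable def IsParabolicClosure (x : G) (P : Subgroup G) : Prop :=
  S.IsParabolic P ∧ x ∈ P ∧ ∀ H : Subgroup G, S.IsParabolic H → x ∈ H → P ≤ H

end GarsideStructure

/-!
Iterating the swap map takes `x` to a recurrent conjugate `y`, and `y` conjugated by the meet `e` of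
`1, y, …, yⁿ` is `swap^[n] y`. If `swap^[n] y = y`, then `e` commutes with `y`, and this forces
`e = 1 ∧ yⁿ`; the denominator and numerator of `y` are then factors of those of `yⁿ`, so that `y`
and `yⁿ` lie in the same standard parabolic subgroups.

If `g` conjugates `y` to `w`, both recurrent, then the transports of `g` at the powers of `y` stay
in a finite interval. By the pigeonhole principle `g` conjugates the denominator of some `yᴺ` to
that of `wᴺ`, and likewise the numerators, so support preservation applies to their positive
product: `g` conjugates `G_{Supp y}` to `G_{Supp w}`.

Now let `xᵏ ∈ G_X` with `k > 0`, and let `c` conjugate `x` to a recurrent `y`. For a suitable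
multiple `N` of `k`, the power `yᴺ` is recurrent and has the same support group as `y`. Swapping
`xᴺ` stays within `G_X` and reaches a recurrent `w ∈ G_X` through a conjugator `d ∈ G_X`. Then
`c⁻¹d` conjugates `yᴺ` to `w`, hence `y ∈ G_{Supp y}` into `G_{Supp w} ≤ G_X`; as this conjugate of
`y` is `d⁻¹xd`, also `x ∈ G_X`.
-/

namespace GarsideStructure

open Function

variable {G : Type*} [Group G] {S : GarsideStructure G}

/-! ### The prefix order -/

lemma one_le_iff {a : G} : S.le 1 a ↔ a ∈ S.pos := by simp [le]

lemma le.refl (a : G) : S.le a a := by simp [le, S.pos.one_mem]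

lemma le.trans {a b c : G} (hab : S.le a b) (hbc : S.le b c) : S.le a c := by
  simpa [le, mul_assoc] using S.pos.mul_mem hab hbc

lemma le.antisymm {a b : G} (hab : S.le a b) (hba : S.le b a) : a = b :=
  inv_mul_eq_one.mp (S.units_triv _ hab (by simpa [le] using hba))

lemma inv_mul_le_iff_le_mul {a b c : G} : S.le (c⁻¹ * a) b ↔ S.le a (c * b) := by
  simp [le, mul_assoc]

lemma le_mul_of_mem_center {z p u : G} (hz : z ∈ Subgroup.center G) (hp : p ∈ S.pos)
    (h : S.le z u) : S.le z (p * u) := by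
  have hzp : z⁻¹ * (p * u) = p * (z⁻¹ * u) := by
    rw [← mul_assoc, ← Subgroup.mem_center_iff.mp (inv_mem hz) p, mul_assoc]
  simpa [le, hzp] using S.pos.mul_mem hp h

lemma le_meet_iff {a b c : G} : S.le c (S.meet a b) ↔ S.le c a ∧ S.le c b :=
  ⟨fun h => ⟨h.trans (S.meet_le_left a b), h.trans (S.meet_le_right a b)⟩,
    fun h => S.le_meet a b c h.1 h.2⟩

lemma eq_of_forall_le_iff {a b : G} (h : ∀ c, S.le c a ↔ S.le c b) : a = b :=
  ((h a).mp (le.refl a)).antisymm ((h b).mpr (le.refl b))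

lemma mul_meet (c a b : G) : c * S.meet a b = S.meet (c * a) (c * b) :=
  eq_of_forall_le_iff (S := S) fun f => by simp only [le_meet_iff, ← inv_mul_le_iff_le_mul]

/-! ### Denominators, numerators and transport -/

lemma DL_mem_pos (x : G) : S.DL x ∈ S.pos := by simpa [DL] using S.meet_le_left 1 x

lemma NL_mem_pos (x : G) : S.NL x ∈ S.pos := by simpa [NL, DL] using S.meet_le_right 1 x

lemma inv_DL_mul_NL (x : G) : (S.DL x)⁻¹ * S.NL x = x := by simp [NL]

lemma transport_eq_of_semiconjBy {u w y : G} (h : SemiconjBy u w y) :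
    S.transport y u = S.DL y * u * (S.DL w)⁻¹ := by
  rw [transport, NL, DL, DL, inv_inv, mul_meet, mul_one, mul_assoc _ y u, ← h.eq, mul_assoc _ u w]

lemma inv_transport_of_semiconjBy {u w y : G} (h : SemiconjBy u w y) :
    (S.transport y u)⁻¹ = S.transport w u⁻¹ := by
  simp [transport_eq_of_semiconjBy h, transport_eq_of_semiconjBy h.inv_symm_left, mul_assoc]

lemma transport_self (x : G) : S.transport x x = S.swap x :=
  transport_eq_of_semiconjBy (Commute.refl x)

/-! ### Intervals -/

/-- For central `z` this is the interval of all `x` with `z⁻¹ ≼ x ≼ z`; the upper bound is expressed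
as a lower bound on `x⁻¹` so that stability under inversion is evident. -/
def interval (S : GarsideStructure G) (z : G) : Set G := {x | S.le z⁻¹ x ∧ S.le z⁻¹ x⁻¹}

lemma mul_delta_pow_le_mul_delta_pow_iff (k : ℕ) {a b : G} :
    S.le (a * S.delta ^ k) (b * S.delta ^ k) ↔ S.le a b := by
  induction k generalizing a b with
  | zero => simp
  | succ k ih =>
    rw [pow_succ', ← mul_assoc, ← mul_assoc, ih, le, S.conj_delta]
    simp [le, mul_assoc]

lemma finite_Div_delta_pow (k : ℕ) : (S.Div (S.delta ^ k)).Finite := by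
  induction k with
  | zero =>
    refine (Set.finite_singleton 1).subset fun s hs => ?_
    exact le.antisymm (by simpa using hs.2) (one_le_iff.mpr hs.1)
  | succ k ih =>
    refine (S.divDelta_finite.image2 (· * ·) ih).subset fun s ⟨hs, hsk⟩ => ?_
    set t := S.meet s S.delta with ht
    have ht_pos : t ∈ S.pos :=
      one_le_iff.mp (le_meet_iff.mpr ⟨one_le_iff.mpr hs, one_le_iff.mpr S.delta_pos⟩)
    have hs_le : S.le s (t * S.delta ^ k) := by
      rw [← inv_mul_cancel_right s (S.delta ^ k), mul_delta_pow_le_mul_delta_pow_iff, ht,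
        le_meet_iff, ← mul_delta_pow_le_mul_delta_pow_iff k (b := S.delta), inv_mul_cancel_right,
        ← pow_succ']
      exact ⟨by simpa [le] using pow_mem S.delta_pos k, hsk⟩
    exact ⟨t, ⟨ht_pos, S.meet_le_right _ _⟩, t⁻¹ * s,
      ⟨S.meet_le_left _ _, inv_mul_le_iff_le_mul.mpr hs_le⟩, mul_inv_cancel_left t s⟩

lemma finite_interval_delta_pow (k : ℕ) : (S.interval (S.delta ^ k)).Finite := by
  refine ((finite_Div_delta_pow (S := S) (k + k)).preimage
    (mul_right_injective (S.delta ^ k)).injOn).subset fun x ⟨hx, hx'⟩ => ⟨?_, ?_⟩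
  · simpa [le] using hx
  · have hx_le_one : S.le (x * (S.delta ^ k)⁻¹) 1 := by simpa [le] using hx'
    rw [pow_add, ← inv_mul_le_iff_le_mul, inv_mul_cancel_left]
    simpa using (mul_delta_pow_le_mul_delta_pow_iff k).mpr hx_le_one

lemma exists_central_delta_pow_mem_interval (x : G) :
    ∃ k : ℕ, S.delta ^ k ∈ Subgroup.center G ∧ x ∈ S.interval (S.delta ^ k) := by
  obtain ⟨n, hn, hn_center⟩ := S.central_power
  obtain ⟨p, q, -, hp, hq⟩ := S.delta_bounds x
  have zpow_le {i j : ℤ} (hij : i ≤ j) : S.le (S.delta ^ i) (S.delta ^ j) := by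
    obtain ⟨d, rfl⟩ := Int.le.dest hij
    simpa [le, zpow_add] using pow_mem S.delta_pos d
  have hk : p.natAbs + q.natAbs ≤ n * (p.natAbs + q.natAbs) := Nat.le_mul_of_pos_left _ hn
  have hk_center : S.delta ^ (n * (p.natAbs + q.natAbs)) ∈ Subgroup.center G :=
    pow_mul S.delta n _ ▸ pow_mem hn_center _
  set k := n * (p.natAbs + q.natAbs)
  have hx : S.le (S.delta ^ k)⁻¹ x := by
    have hkp := zpow_le (i := -k) (j := p) (by lia)
    rw [zpow_neg, zpow_natCast] at hkp
    exact hkp.trans hp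
  have hx' : S.le x (S.delta ^ k) := by
    have hqk := zpow_le (i := q) (j := k) (by lia)
    rw [zpow_natCast] at hqk
    exact le.trans hq hqk
  refine ⟨k, hk_center, hx, ?_⟩
  rwa [le, inv_inv, ← Subgroup.mem_center_iff.mp hk_center]

lemma exists_finite_interval_mem (S : GarsideStructure G) (x : G) :
    ∃ z ∈ Subgroup.center G, (S.interval z).Finite ∧ x ∈ S.interval z :=
  let ⟨k, hk, hx⟩ := exists_central_delta_pow_mem_interval (S := S) x
  ⟨S.delta ^ k, hk, finite_interval_delta_pow k, hx⟩

lemma transport_mem_interval {z u : G} (hz : z ∈ Subgroup.center G) (hu : u ∈ S.interval z)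
    (y : G) : S.transport y u ∈ S.interval z := by
  have le_transport {u : G} (hu : S.le z⁻¹ u) (y : G) : S.le z⁻¹ (S.transport y u) :=
    le_meet_iff.mpr ⟨le_mul_of_mem_center (inv_mem hz) (DL_mem_pos y) hu,
      le_mul_of_mem_center (inv_mem hz) (NL_mem_pos y) hu⟩
  refine ⟨le_transport hu.1 y, ?_⟩
  rw [inv_transport_of_semiconjBy (w := u⁻¹ * y * u) (by simp [SemiconjBy, mul_assoc])]
  exact le_transport hu.2 _

/-! ### Meets of consecutive powers -/

/-- The meet of `1, y, …, y ^ n` for the prefix order. It is the conjugator from `y` to its `n`-th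
swap iterate. -/
def powMeet (S : GarsideStructure G) (y : G) : ℕ → G
  | 0 => 1
  | n + 1 => S.meet 1 (y * S.powMeet y n)

lemma le_powMeet_iff {f y : G} {n : ℕ} : S.le f (S.powMeet y n) ↔ ∀ i ≤ n, S.le f (y ^ i) := by
  induction n generalizing f with
  | zero => simp [powMeet]
  | succ n ih =>
    simp only [powMeet, le_meet_iff, ← inv_mul_le_iff_le_mul, ih]
    simp only [inv_mul_le_iff_le_mul, ← pow_succ']
    constructor
    · rintro ⟨h_zero, h_succ⟩ (_ | i) hi
      · simpa using h_zero
      · exact h_succ i (by lia)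
    · exact fun h => ⟨by simpa using h 0, fun i hi => h (i + 1) (by lia)⟩

lemma powMeet_one (y : G) : S.powMeet y 1 = S.meet 1 y := by simp [powMeet]

lemma powMeet_add {y : G} {m j n : ℕ} (hm : m ≤ j + n) (hj : j ≤ m + 1) :
    S.powMeet y (j + n) = S.meet (S.powMeet y m) (y ^ j * S.powMeet y n) := by
  refine eq_of_forall_le_iff (S := S) fun f => ?_
  simp only [le_meet_iff, ← inv_mul_le_iff_le_mul, le_powMeet_iff]
  simp only [inv_mul_le_iff_le_mul, ← pow_add]
  refine ⟨fun h => ⟨fun i hi => h i (by lia), fun i hi => h (j + i) (by lia)⟩, fun h i hi => ?_⟩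
  rcases le_or_gt i m with him | him
  · exact h.1 i him
  · obtain ⟨d, rfl⟩ := Nat.exists_eq_add_of_le (show j ≤ i by lia)
    exact h.2 d (by lia)

lemma powMeet_mem_GX (hLCM : S.IsLCM) {X : Set G} (hX : X ⊆ S.atoms) {y : G} (hy : y ∈ S.GX X)
    (n : ℕ) : S.powMeet y n ∈ S.GX X := by
  induction n with
  | zero => exact one_mem _
  | succ n ih => exact (hLCM.lattice_closed X hX _ _ (one_mem _) (mul_mem hy ih)).1

lemma powMeet_mul_powMeet {y : G} {m : ℕ} (h : Commute (S.powMeet y m) y) (n : ℕ) :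
    S.powMeet y m * S.powMeet y n = S.powMeet y (m + n) := by
  refine eq_of_forall_le_iff (S := S) fun f => ?_
  rw [← inv_mul_le_iff_le_mul, le_powMeet_iff, le_powMeet_iff]
  simp only [inv_mul_le_iff_le_mul, (h.pow_right _).eq]
  simp only [← inv_mul_le_iff_le_mul, le_powMeet_iff]
  simp only [inv_mul_le_iff_le_mul, ← pow_add]
  refine ⟨fun h i hi => ?_, fun h i hi j hj => h (i + j) (by lia)⟩
  rcases le_total i n with hin | hni
  · exact h i hin 0 (Nat.zero_le m)
  · simpa [hni] using h n le_rfl (i - n) (by lia)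

lemma powMeet_mul {y : G} {n : ℕ} (h : Commute (S.powMeet y n) y) (k : ℕ) :
    S.powMeet y (n * k) = S.powMeet y n ^ k := by
  induction k with
  | zero => simp [powMeet]
  | succ k ih => rw [pow_succ', ← ih, powMeet_mul_powMeet h, Nat.mul_succ, add_comm]

/-- Both sides become the meet of `1, y, …, y ^ (2 * n)` after multiplication by
`S.powMeet y n`. -/
lemma powMeet_eq_meet_pow {y : G} {n : ℕ} (h : Commute (S.powMeet y n) y) :
    S.powMeet y n = S.meet 1 (y ^ n) := by
  refine mul_left_cancel (a := S.powMeet y n) ?_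
  rw [powMeet_mul_powMeet h, mul_meet, mul_one, (h.pow_right n).eq]
  exact powMeet_add (Nat.le_add_left n n) (Nat.le_succ n)

/-! ### Recurrent elements -/

lemma semiconjBy_swap (x : G) : SemiconjBy (S.meet 1 x) (S.swap x) x := by
  simp [SemiconjBy, swap, DL, mul_assoc]

lemma semiconjBy_swap_iterate (y : G) (n : ℕ) :
    SemiconjBy (S.powMeet y n) (S.swap^[n] y) y := by
  induction n with
  | zero => exact SemiconjBy.one_left y
  | succ n ih =>
    have h_succ : S.powMeet y (n + 1) = S.powMeet y n * S.meet 1 (S.swap^[n] y) := by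
      rw [mul_meet, mul_one, ih.eq, add_comm, powMeet_add (m := n) (by lia) (by lia), pow_one]
    rw [h_succ, iterate_succ_apply']
    exact ih.mul_left (semiconjBy_swap _)

lemma isPeriodicPt_swap_iff {y : G} {n : ℕ} :
    IsPeriodicPt S.swap n y ↔ Commute (S.powMeet y n) y := by
  have h := (semiconjBy_swap_iterate (S := S) y n).eq
  refine ⟨fun hy => ?_, fun hy => ?_⟩
  · rwa [hy.eq] at h
  · exact mul_left_cancel (h.trans hy.eq.symm)

lemma exists_recurrent_swap_iterate (S : GarsideStructure G) (x : G) :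
    ∃ i : ℕ, S.Recurrent (S.swap^[i] x) := by
  obtain ⟨z, hz, hz_finite, hx⟩ := S.exists_finite_interval_mem x
  have h_mapsTo : Set.MapsTo S.swap (S.interval z) (S.interval z) := fun y hy =>
    transport_self (S := S) y ▸ transport_mem_interval hz hy y
  obtain ⟨i, j, hij, h_eq⟩ := Set.Finite.exists_lt_map_eq_of_forall_mem
    (fun n : ℕ => h_mapsTo.iterate n hx) hz_finite
  refine ⟨i, j - i, Nat.sub_pos_of_lt hij, ?_⟩
  rw [← iterate_add_apply, Nat.sub_add_cancel hij.le, h_eq]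

lemma exists_recurrent_semiconjBy (hLCM : S.IsLCM) (x : G) :
    ∃ c y : G, S.Recurrent y ∧ SemiconjBy c y x ∧ ∀ X ⊆ S.atoms, x ∈ S.GX X → c ∈ S.GX X := by
  obtain ⟨i, hi⟩ := S.exists_recurrent_swap_iterate x
  exact ⟨S.powMeet x i, S.swap^[i] x, hi, semiconjBy_swap_iterate x i,
    fun X hX hx => powMeet_mem_GX hLCM hX hx i⟩

lemma DL_pow_of_isPeriodicPt {y : G} {n : ℕ} (hy : IsPeriodicPt S.swap n y) :
    S.DL (y ^ n) = (S.powMeet y n)⁻¹ := by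
  rw [DL, powMeet_eq_meet_pow (isPeriodicPt_swap_iff.mp hy)]

lemma DL_pow_mul_of_isPeriodicPt {y : G} {n : ℕ} (hy : IsPeriodicPt S.swap n y) (k : ℕ) :
    S.DL (y ^ (n * k)) = S.DL (y ^ n) ^ k := by
  rw [DL_pow_of_isPeriodicPt (hy.mul_const k), DL_pow_of_isPeriodicPt hy,
    powMeet_mul (isPeriodicPt_swap_iff.mp hy), inv_pow]

lemma recurrent_pow_of_isPeriodicPt {y : G} {n : ℕ} (hy : IsPeriodicPt S.swap n y) :
    S.Recurrent (y ^ n) := by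
  have h_commute : Commute (S.meet 1 (y ^ n)) (y ^ n) := by
    have h := isPeriodicPt_swap_iff.mp hy
    exact powMeet_eq_meet_pow h ▸ h.pow_right n
  exact ⟨1, one_pos, isPeriodicPt_swap_iff.mpr (powMeet_one (S := S) _ ▸ h_commute)⟩

lemma mem_GX_of_pow_mem_GX_of_isPeriodicPt (hLCM : S.IsLCM) {X : Set G} (hX : X ⊆ S.atoms)
    {y : G} {n : ℕ} (hy : IsPeriodicPt S.swap n y) (hn : 0 < n) (hyX : y ^ n ∈ S.GX X) :
    y ∈ S.GX X := by
  obtain ⟨hDX, hNX⟩ := hLCM.fraction_closed X hX _ hyX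
  have hDL := DL_pow_of_isPeriodicPt hy
  have mul_meet_mem_pos {i : ℕ} (hi : i < n) : S.DL (y ^ n) * y ^ i * S.meet 1 y ∈ S.pos := by
    have h_le : S.le (S.powMeet y n) (y ^ i * S.meet 1 y) := by
      rw [mul_meet, mul_one, ← pow_succ, le_meet_iff]
      exact ⟨le_powMeet_iff.mp (le.refl _) i hi.le, le_powMeet_iff.mp (le.refl _) (i + 1) hi⟩
    rwa [hDL, mul_assoc]
  have hD : S.DL y ∈ S.GX X := by
    refine (hLCM.factor_closed X hX _ hDX (DL_mem_pos _) _ _ (mul_meet_mem_pos hn)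
      (DL_mem_pos y) ?_).2
    simp [DL]
  have hN : S.NL y ∈ S.GX X := by
    refine (hLCM.factor_closed X hX _ hNX (NL_mem_pos _) _ _
      (mul_meet_mem_pos (Nat.sub_one_lt hn.ne')) (NL_mem_pos y) ?_).2
    rw [NL, NL, ← pow_sub_one_mul hn.ne' y]
    simp [DL, mul_assoc]
  exact inv_DL_mul_NL (S := S) y ▸ mul_mem (inv_mem hD) hN

lemma exists_semiconjBy_DL_pow {g w y : G} {n : ℕ} (h : SemiconjBy g w y)
    (hw : IsPeriodicPt S.swap n w) (hy : IsPeriodicPt S.swap n y) :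
    ∃ k > 0, SemiconjBy g (S.DL (w ^ (n * k))) (S.DL (y ^ (n * k))) := by
  obtain ⟨z, hz, hz_finite, hg⟩ := S.exists_finite_interval_mem g
  obtain ⟨i, j, hij, h_eq⟩ := Set.Finite.exists_lt_map_eq_of_forall_mem
    (fun k : ℕ => transport_mem_interval hz hg (y ^ (n * k))) hz_finite
  obtain ⟨k, hk, rfl⟩ : ∃ k > 0, j = i + k := ⟨j - i, by lia, by lia⟩
  refine ⟨k, hk, ?_⟩
  simp only [transport_eq_of_semiconjBy (h.pow_right _), DL_pow_mul_of_isPeriodicPt hy,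
    DL_pow_mul_of_isPeriodicPt hw] at h_eq ⊢
  have h_cancel : g = S.DL (y ^ n) ^ k * g * (S.DL (w ^ n) ^ k)⁻¹ := by
    simp only [pow_add _ i k, mul_inv_rev, ← mul_assoc, mul_left_inj] at h_eq
    simpa only [mul_assoc, mul_right_inj] using h_eq
  exact eq_mul_inv_iff_mul_eq.mp h_cancel

/-! ### Supports -/

lemma deltaOf_le {X : Set G} {c : G} (hc : S.le 1 c) (h : ∀ x ∈ X, S.le x c) :
    S.le (S.deltaOf X) c := by
  rw [deltaOf]
  split_ifs with h_lub
  · exact h_lub.choose_spec.2 c h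
  · exact hc

lemma exists_lub {X : Set G} (hX : X.Finite) (hX_ne : X.Nonempty) :
    ∃ d : G, (∀ x ∈ X, S.le x d) ∧ ∀ c : G, (∀ x ∈ X, S.le x c) → S.le d c := by
  induction X, hX using Set.Finite.induction_on with
  | empty => exact absurd hX_ne Set.not_nonempty_empty
  | @insert a X _ _ ih =>
    rcases X.eq_empty_or_nonempty with rfl | hX_ne
    · exact ⟨a, by simp [le.refl]⟩
    · obtain ⟨d, hXd, hd⟩ := ih hX_ne
      simp only [Set.forall_mem_insert]
      exact ⟨S.join a d,
        ⟨S.le_join_left a d, fun x hx => (hXd x hx).trans (S.le_join_right a d)⟩,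
        fun c hc => S.join_le a d c hc.1 (hd c hc.2)⟩

lemma le_deltaOf {X : Set G} (hX : X ⊆ S.atoms) {x : G} (hx : x ∈ X) : S.le x (S.deltaOf X) := by
  have hX_finite : X.Finite := S.divDelta_finite.subset fun a ha =>
    ⟨(hX ha).1, S.atoms_divide_delta a (hX ha).1 (hX ha).2.1 (hX ha).2.2⟩
  have h_lub := exists_lub (S := S) hX_finite ⟨x, hx⟩
  rw [deltaOf, dif_pos h_lub]
  exact h_lub.choose_spec.1 x hx

lemma closureOf_subset_atoms (X : Set G) : S.closureOf X ⊆ S.atoms := Set.inter_subset_right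

lemma closureOf_subset_GX (X : Set G) : S.closureOf X ⊆ S.GX X := Subgroup.subset_closure

lemma subset_closureOf {X : Set G} (hX : X ⊆ S.atoms) : X ⊆ S.closureOf X := fun _ hx =>
  ⟨⟨(hX hx).1, le_deltaOf hX hx⟩, hX hx⟩

lemma one_le_deltaOf (hLCM : S.IsLCM) {X : Set G} (hX : X ⊆ S.atoms) : S.le 1 (S.deltaOf X) := by
  have h_one : (1 : G) ∈ S.Div (S.deltaOf X) := by
    rw [hLCM.div_eq X hX]
    exact ⟨⟨S.pos.one_mem, one_le_iff.mpr S.delta_pos⟩, one_mem _, S.pos.one_mem⟩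
  exact h_one.2

lemma le_deltaOf_of_mem_GX (hLCM : S.IsLCM) {X : Set G} (hX : X ⊆ S.atoms) {a : G}
    (ha : a ∈ S.atoms) (haX : a ∈ S.GX X) : S.le a (S.deltaOf X) := by
  have h_mem : a ∈ S.Div (S.deltaOf X) := by
    rw [hLCM.div_eq X hX]
    exact ⟨⟨ha.1, S.atoms_divide_delta a ha.1 ha.2.1 ha.2.2⟩, haX, ha.1⟩
  exact h_mem.2

lemma GX_le_GX_iff (hLCM : S.IsLCM) {U X : Set G} (hU : U ⊆ S.atoms) (hX : X ⊆ S.atoms) :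
    S.GX U ≤ S.GX X ↔ U ⊆ S.GX X := by
  refine ⟨fun h => ((subset_closureOf hU).trans (closureOf_subset_GX U)).trans h, fun h => ?_⟩
  have h_delta : S.le (S.deltaOf U) (S.deltaOf X) :=
    deltaOf_le (one_le_deltaOf hLCM hX) fun u hu => le_deltaOf_of_mem_GX hLCM hX (hU hu) (h hu)
  exact Subgroup.closure_mono fun a ha => ⟨⟨ha.1.1, ha.1.2.trans h_delta⟩, ha.2⟩

lemma exists_atom_list_prod_eq {a : G} (ha : a ∈ S.pos) :
    ∃ l : List G, (∀ x ∈ l, x ∈ S.atoms) ∧ l.prod = a := by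
  rw [← S.atoms_generate] at ha
  exact Submonoid.exists_list_of_mem_closure ha

lemma list_prod_mem_GX_iff (hLCM : S.IsLCM) {X : Set G} (hX : X ⊆ S.atoms) {l : List G}
    (hl : ∀ a ∈ l, a ∈ S.atoms) : l.prod ∈ S.GX X ↔ ∀ a ∈ l, a ∈ S.GX X := by
  refine ⟨fun h => ?_, list_prod_mem⟩
  induction l with
  | nil => simp
  | cons b l ih =>
    obtain ⟨hb, hl⟩ := List.forall_mem_cons.mp hl
    have hl_pos : l.prod ∈ S.pos := list_prod_mem fun a ha => (hl a ha).1
    rw [List.prod_cons] at h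
    obtain ⟨hbX, hlX⟩ :=
      hLCM.factor_closed X hX _ h (mul_mem hb.1 hl_pos) b l.prod hb.1 hl_pos rfl
    exact List.forall_mem_cons.mpr ⟨hbX, ih hl hlX⟩

lemma exists_supp_eq (S : GarsideStructure G) (x : G) : ∃ l₁ l₂ : List G,
    (∀ a ∈ l₁, a ∈ S.atoms) ∧ (∀ a ∈ l₂, a ∈ S.atoms) ∧ l₁.prod = S.DL x ∧ l₂.prod = S.NL x ∧
      S.supp x = S.closureOf ({a | a ∈ l₁} ∪ {a | a ∈ l₂}) := by
  obtain ⟨l₁, h₁, hl₁⟩ := exists_atom_list_prod_eq (DL_mem_pos (S := S) x)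
  obtain ⟨l₂, h₂, hl₂⟩ := exists_atom_list_prod_eq (NL_mem_pos (S := S) x)
  have h : ∃ p : List G × List G, (∀ a ∈ p.1, a ∈ S.atoms) ∧ (∀ a ∈ p.2, a ∈ S.atoms) ∧
      p.1.prod = S.DL x ∧ p.2.prod = S.NL x := ⟨(l₁, l₂), h₁, h₂, hl₁, hl₂⟩
  obtain ⟨hD_atoms, hN_atoms, hD, hN⟩ := h.choose_spec
  exact ⟨_, _, hD_atoms, hN_atoms, hD, hN, by rw [supp, dif_pos h]⟩

lemma supp_subset_atoms (x : G) : S.supp x ⊆ S.atoms := by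
  obtain ⟨l₁, l₂, -, -, -, -, h⟩ := S.exists_supp_eq x
  exact h ▸ closureOf_subset_atoms _

lemma mem_GX_iff_DL_mem_and_NL_mem (hLCM : S.IsLCM) {X : Set G} (hX : X ⊆ S.atoms) {x : G} :
    x ∈ S.GX X ↔ S.DL x ∈ S.GX X ∧ S.NL x ∈ S.GX X :=
  ⟨hLCM.fraction_closed X hX x, fun h => inv_DL_mul_NL (S := S) x ▸ mul_mem (inv_mem h.1) h.2⟩

lemma GX_supp_le_iff (hLCM : S.IsLCM) {X : Set G} (hX : X ⊆ S.atoms) {x : G} :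
    S.GX (S.supp x) ≤ S.GX X ↔ x ∈ S.GX X := by
  obtain ⟨l₁, l₂, h₁, h₂, hD, hN, h_supp⟩ := S.exists_supp_eq x
  have hU : {a | a ∈ l₁} ∪ {a | a ∈ l₂} ⊆ S.atoms := Set.union_subset h₁ h₂
  have h_closure : S.GX (S.supp x) = S.GX ({a | a ∈ l₁} ∪ {a | a ∈ l₂}) := by
    have h_atoms := closureOf_subset_atoms (S := S) ({a | a ∈ l₁} ∪ {a | a ∈ l₂})
    rw [h_supp]
    exact le_antisymm ((GX_le_GX_iff hLCM h_atoms hU).mpr (closureOf_subset_GX _))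
      ((GX_le_GX_iff hLCM hU h_atoms).mpr
        ((subset_closureOf hU).trans ((subset_closureOf h_atoms).trans (closureOf_subset_GX _))))
  rw [h_closure, GX_le_GX_iff hLCM hU hX, Set.union_subset_iff,
    mem_GX_iff_DL_mem_and_NL_mem hLCM hX, ← hD, ← hN, list_prod_mem_GX_iff hLCM hX h₁,
    list_prod_mem_GX_iff hLCM hX h₂]
  rfl

lemma mem_GX_supp (hLCM : S.IsLCM) (x : G) : x ∈ S.GX (S.supp x) :=
  (GX_supp_le_iff hLCM (supp_subset_atoms x)).mp le_rfl

lemma GX_supp_eq_of_forall_mem_iff (hLCM : S.IsLCM) {x y : G}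
    (h : ∀ X ⊆ S.atoms, x ∈ S.GX X ↔ y ∈ S.GX X) : S.GX (S.supp x) = S.GX (S.supp y) :=
  le_antisymm
    ((GX_supp_le_iff hLCM (supp_subset_atoms y)).mpr
      ((h _ (supp_subset_atoms y)).mpr (mem_GX_supp hLCM y)))
    ((GX_supp_le_iff hLCM (supp_subset_atoms x)).mpr
      ((h _ (supp_subset_atoms x)).mp (mem_GX_supp hLCM x)))

lemma GX_supp_pow_of_isPeriodicPt (hLCM : S.IsLCM) {y : G} {n : ℕ}
    (hy : IsPeriodicPt S.swap n y) (hn : 0 < n) : S.GX (S.supp (y ^ n)) = S.GX (S.supp y) :=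
  GX_supp_eq_of_forall_mem_iff hLCM fun _ hX =>
    ⟨mem_GX_of_pow_mem_GX_of_isPeriodicPt hLCM hX hy hn, fun h => pow_mem h n⟩

lemma GX_supp_DL_mul_NL (hLCM : S.IsLCM) (x : G) :
    S.GX (S.supp (S.DL x * S.NL x)) = S.GX (S.supp x) :=
  GX_supp_eq_of_forall_mem_iff hLCM fun X hX => by
    rw [mem_GX_iff_DL_mem_and_NL_mem hLCM hX (x := x)]
    exact ⟨fun h => hLCM.factor_closed X hX _ h (mul_mem (DL_mem_pos x) (NL_mem_pos x)) _ _
      (DL_mem_pos x) (NL_mem_pos x) rfl, fun h => mul_mem h.1 h.2⟩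

/-! ### Conjugacy of supports and roots -/

lemma map_conj_GX_supp_of_semiconjBy_DL (hLCM : S.IsLCM) (hsp : S.SupportPreserving) {g w y : G}
    (h : SemiconjBy g w y) (hD : SemiconjBy g (S.DL w) (S.DL y)) :
    (S.GX (S.supp y)).map (MulAut.conj g⁻¹).toMonoidHom = S.GX (S.supp w) := by
  rw [← GX_supp_DL_mul_NL hLCM y, ← GX_supp_DL_mul_NL hLCM w]
  refine hsp _ (mul_mem (DL_mem_pos y) (NL_mem_pos y)) _
    (mul_mem (DL_mem_pos w) (NL_mem_pos w)) g ?_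
  have hN : SemiconjBy g (S.NL w) (S.NL y) := hD.mul_right h
  rw [mul_assoc, ← (hD.mul_right hN).eq, inv_mul_cancel_left]

lemma Recurrent.map_conj_GX_supp (hLCM : S.IsLCM) (hsp : S.SupportPreserving) {g w y : G}
    (hw : S.Recurrent w) (hy : S.Recurrent y) (h : SemiconjBy g w y) :
    (S.GX (S.supp y)).map (MulAut.conj g⁻¹).toMonoidHom = S.GX (S.supp w) := by
  obtain ⟨n, hn, hw : IsPeriodicPt S.swap n w⟩ := hw
  obtain ⟨m, hm, hy : IsPeriodicPt S.swap m y⟩ := hy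
  replace hw := hw.mul_const m
  replace hy := hy.const_mul n
  obtain ⟨k, hk, hD⟩ := exists_semiconjBy_DL_pow h hw hy
  have hN : 0 < n * m * k := by positivity
  rw [← GX_supp_pow_of_isPeriodicPt hLCM (hw.mul_const k) hN,
    ← GX_supp_pow_of_isPeriodicPt hLCM (hy.mul_const k) hN]
  exact map_conj_GX_supp_of_semiconjBy_DL hLCM hsp (h.pow_right _) hD

lemma mem_GX_of_pow_mem_GX (hLCM : S.IsLCM) (hsp : S.SupportPreserving) {X : Set G}
    (hX : X ⊆ S.atoms) {x : G} {k : ℕ} (hk : 0 < k) (hx : x ^ k ∈ S.GX X) : x ∈ S.GX X := by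
  obtain ⟨c, y, ⟨n, hn, hy : IsPeriodicPt S.swap n y⟩, hc, -⟩ := exists_recurrent_semiconjBy hLCM x
  replace hy := hy.mul_const k
  have hxX : x ^ (n * k) ∈ S.GX X := by
    rw [mul_comm, pow_mul]
    exact pow_mem hx n
  obtain ⟨d, w, hw, hd, hd_mem⟩ := exists_recurrent_semiconjBy hLCM (x ^ (n * k))
  have hdX : d ∈ S.GX X := hd_mem X hX hxX
  have hwX : w ∈ S.GX X := by
    rw [eq_inv_mul_of_mul_eq hd.eq]
    exact mul_mem (inv_mem hdX) (mul_mem hxX hdX)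
  have h_conj : SemiconjBy (c⁻¹ * d) w (y ^ (n * k)) :=
    (hc.pow_right (n * k)).inv_symm_left.mul_left hd
  have hyX : (c⁻¹ * d)⁻¹ * y * (c⁻¹ * d) ∈ S.GX X := by
    refine (GX_supp_le_iff hLCM hX).mpr hwX ?_
    rw [← hw.map_conj_GX_supp hLCM hsp (recurrent_pow_of_isPeriodicPt hy) h_conj,
      GX_supp_pow_of_isPeriodicPt hLCM hy (by positivity)]
    exact ⟨y, mem_GX_supp hLCM y, by simp [mul_assoc]⟩
  have hx_eq : x = d * ((c⁻¹ * d)⁻¹ * y * (c⁻¹ * d)) * d⁻¹ := by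
    rw [eq_mul_inv_of_mul_eq hc.eq.symm]
    group
  exact hx_eq ▸ mul_mem (mul_mem hdX hyX) (inv_mem hdX)

lemma IsParabolic.mem_of_zpow_mem (hLCM : S.IsLCM) (hsp : S.SupportPreserving) {H : Subgroup G}
    (hH : S.IsParabolic H) {x : G} {m : ℤ} (hm : m ≠ 0) (hx : x ^ m ∈ H) : x ∈ H := by
  obtain ⟨_, c, ⟨X, hX, -, rfl⟩, rfl⟩ := hH
  rw [Subgroup.mem_map_equiv] at hx ⊢
  refine mem_GX_of_pow_mem_GX hLCM hsp hX (Int.natAbs_pos.mpr hm) ?_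
  rw [map_zpow] at hx
  rcases Int.natAbs_eq m with h | h
  · rwa [h, zpow_natCast] at hx
  · rwa [h, zpow_neg, zpow_natCast, inv_mem_iff] at hx

end GarsideStructure

/-- in a support-preserving LCM-Garside structure, the parabolic closures
of `x` and `x^m` (`m ≠ 0`) coincide; consequently any root of an element of a parabolic
subgroup belongs to that parabolic subgroup. -/
theorem garside_parabolic_closure_of_powers {G : Type*} [Group G]
    (S : GarsideStructure G) (hLCM : S.IsLCM) (hsp : S.SupportPreserving)
    (x : G) (m : ℤ) (hm : m ≠ 0) :
    (∀ P Q : Subgroup G,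
      S.IsParabolicClosure x P → S.IsParabolicClosure (x ^ m) Q → P = Q) ∧
    (∀ H : Subgroup G, S.IsParabolic H → ∀ y ∈ H, x ^ m = y → x ∈ H) := by
  have root (H : Subgroup G) (hH : S.IsParabolic H) (hx : x ^ m ∈ H) : x ∈ H :=
    hH.mem_of_zpow_mem hLCM hsp hm hx
  refine ⟨fun P Q ⟨hP, hxP, hP_min⟩ ⟨hQ, hxQ, hQ_min⟩ => ?_, fun H hH y hy hxy => ?_⟩
  · exact le_antisymm (hP_min Q hQ (root Q hQ hxQ)) (hQ_min P hP (zpow_mem hxP m))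
  · exact root H hH (hxy ▸ hy)
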